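/- Let A be a finite set, π a probability distribution on A, J a self-coupling of π, 0 < ε < 1, and N > 0 an integer. Let φ : {1,…,N} → A have empirical distribution π' with ‖π' − π‖_∞ < ε, and assume min_{a,b∈A} J(a,b) > 2|A|ε + |A|²/N. Then there exists a bijection σ : {1,…,N−1} → {2,…,N} such that (1) the graph on vertices {1,…,N} with edges {(i,σ(i)) : 1 ≤ i ≤ N−1} is connected (isomorphic to a line graph), and (2) the empirical distribution J_σ of the map i ↦ (φ(i), φ(σ(i))) satisfies ‖J_σ − J‖_∞ < 2|A|ε + 3|A|²/N. -/

import Mathlib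

/-- The graph on `{1,…,N}` (encoded as `Fin N`) whose edges are the pairs `(i, σ i)`
for `i ∈ {1,…,N−1}` (encoded as the indices with `i.val < N - 1`). -/
def lineGraph {N : ℕ} (σ : Equiv.Perm (Fin N)) : SimpleGraph (Fin N) :=
  SimpleGraph.fromRel (fun i j => i.val < N - 1 ∧ σ i = j)

/-!
Correct `J` along the diagonal to a self-coupling `J'` of the empirical distribution `π'` of `φ`.
Since `N • J'` has the fibre cardinalities of `φ` as marginals, its entrywise floor can be realized
by partial matchings between fibres, and these extend to a permutation `σ` of the whole vertex set
whose transition counts dominate the floor. Equality of the marginals turns this lower bound into a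
two-sided one: the excess of one entry of a row is the total deficit of the others, hence at most
`|A| - 1`.

Transition counts do not change when `σ` is composed with a transposition of two vertices with the
same label, and such a transposition merges two distinct cycles. Once every transition occurs, a
permutation whose cycles cannot be merged any further is a single cycle; conjugating it by a
label-preserving permutation makes it pass from the last vertex to the first, and cutting it there
gives the line.
-/

section Cycles

open Equiv Equiv.Perm

variable {V : Type*} [Finite V]

-- Going around the cycle the other way shows that `r` also relates the ends of the omitted step.
theorem rel_of_sameCycle {f : Perm V} {r : V → V → Prop} (hr : Equivalence r) {x y : V}
    (hstep : ∀ w, f.SameCycle x w → w ≠ x → r w (f w)) (hxy : f.SameCycle x y) : r x y := by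
  have forward : ∀ n : ℕ, r (f x) ((f ^ (n + 1)) x) := by
    intro n
    induction n with
    | zero => simpa only [zero_add, pow_one] using hr.refl (f x)
    | succ n ih =>
      rw [pow_succ' f (n + 1), Perm.mul_apply]
      by_cases hw : (f ^ (n + 1)) x = x
      · rw [hw]
        exact hr.refl (f x)
      · exact hr.trans ih (hstep _ (sameCycle_pow_right.2 .rfl) hw)
  have from_image : ∀ z, f.SameCycle x z → r (f x) z := by
    intro z hz
    obtain ⟨n, hn, -, rfl⟩ := hz.exists_pow_eq''
    simpa only [Nat.sub_add_cancel hn] using forward (n - 1)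
  exact hr.trans (hr.symm (from_image x .rfl)) (from_image y hxy)

variable [DecidableEq V] {f : Perm V} {i j : V}

theorem sameCycle_mul_swap (hij : ¬f.SameCycle i j) : (f * swap i j).SameCycle i j := by
  have hstep : ∀ w, f.SameCycle j w → w ≠ j → (f * swap i j).SameCycle w (f w) := by
    intro w hjw hwj
    have hwi : w ≠ i := fun h => hij (h ▸ hjw.symm)
    have hw : (f * swap i j) w = f w := by
      rw [Perm.mul_apply, swap_apply_of_ne_of_ne hwi hwj]
    exact hw ▸ sameCycle_apply_right.2 .rfl
  have hj : (f * swap i j).SameCycle j (f j) :=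
    rel_of_sameCycle (SameCycle.equivalence _) hstep (sameCycle_apply_right.2 .rfl)
  have hi : (f * swap i j) i = f j := by rw [Perm.mul_apply, swap_apply_left]
  rw [← hi, sameCycle_apply_right] at hj
  exact hj.symm

theorem sameCycle_setoid_lt_mul_swap (hij : ¬f.SameCycle i j) :
    SameCycle.setoid f < SameCycle.setoid (f * swap i j) := by
  have hmerge := sameCycle_mul_swap hij
  have hstep : ∀ w, (f * swap i j).SameCycle w (f w) := by
    intro w
    have hw : (f * swap i j) (swap i j w) = f w := by rw [Perm.mul_apply, swap_apply_self]
    rw [← hw, sameCycle_apply_right]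
    rcases eq_or_ne w i with rfl | hwi
    · rwa [swap_apply_left]
    rcases eq_or_ne w j with rfl | hwj
    · rw [swap_apply_right]
      exact hmerge.symm
    rw [swap_apply_of_ne_of_ne hwi hwj]
  exact lt_iff_le_not_ge.2
    ⟨fun x y hxy => rel_of_sameCycle (SameCycle.equivalence _) (fun w _ _ => hstep w) hxy,
      fun hle => hij (hle hmerge)⟩

end Cycles

section FiberPreserving

open Equiv Finset

variable {V A : Type*}

theorem apply_swap_of_apply_eq [DecidableEq V] {φ : V → A} {i j : V} (hij : φ i = φ j) (k : V) :
    φ (swap i j k) = φ k := by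
  rw [swap_apply_def]
  split_ifs with hki hkj
  · rw [hki, hij]
  · rw [hkj, hij]
  · rfl

theorem exists_perm_apply_eq_apply_eq {φ : V → A} {x y s t : V} (hxy : x ≠ y) (hst : s ≠ t)
    (hxs : φ x = φ s) (hyt : φ y = φ t) :
    ∃ τ : Perm V, (∀ k, φ (τ k) = φ k) ∧ τ x = s ∧ τ y = t := by
  classical
  set y' := swap x s y with hy'
  have hy's : s ≠ y' := fun h => hxy ((swap x s).injective ((swap_apply_left x s).trans h))
  have hφy' : φ y' = φ t := (apply_swap_of_apply_eq hxs y).trans hyt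
  refine ⟨swap y' t * swap x s, fun k => ?_, ?_, ?_⟩
  · rw [Perm.mul_apply, apply_swap_of_apply_eq hφy', apply_swap_of_apply_eq hxs]
  · rw [Perm.mul_apply, swap_apply_left, swap_apply_of_ne_of_ne hy's hst]
  · rw [Perm.mul_apply, ← hy', swap_apply_left]

theorem exists_embedding_comp_eq {E : Type*} [Fintype E] [Fintype V] [DecidableEq A]
    {u : E → A} {φ : V → A} (h : ∀ a, #{e | u e = a} ≤ #{i | φ i = a}) :
    ∃ f : E ↪ V, ∀ e, φ (f e) = u e := by
  have hfiber : ∀ a, Nonempty ({e // u e = a} ↪ {i // φ i = a}) := fun a =>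
    Function.Embedding.nonempty_of_card_le (by simpa only [Fintype.card_subtype] using h a)
  let g : ∀ a, {e // u e = a} ↪ {i // φ i = a} := fun a => (hfiber a).some
  exact ⟨(sigmaFiberEquiv u).symm.toEmbedding.trans
    (((Function.Embedding.refl A).sigmaMap g).trans (sigmaFiberEquiv φ).toEmbedding),
    fun e => (g (u e) ⟨e, rfl⟩).2⟩

end FiberPreserving

section TransitionCount

open Equiv Equiv.Perm Finset

variable {V A : Type*} [Fintype V] [DecidableEq A]

/-- The number of steps `i ↦ σ i` leading from label `a` to label `b`: the unnormalized pair
distribution `J_σ`, with the step out of the last vertex included. -/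
def transitionCount (φ : V → A) (σ : Perm V) (a b : A) : ℕ :=
  #{i | φ i = a ∧ φ (σ i) = b}

theorem transitionCount_mul_left (φ : V → A) (σ : Perm V) {τ : Perm V}
    (hτ : ∀ k, φ (τ k) = φ k) : transitionCount φ (τ * σ) = transitionCount φ σ := by
  ext a b
  simp only [transitionCount, Perm.mul_apply, hτ]

theorem transitionCount_mul_right (φ : V → A) (σ : Perm V) {τ : Perm V}
    (hτ : ∀ k, φ (τ k) = φ k) : transitionCount φ (σ * τ) = transitionCount φ σ := by
  ext a b
  refine card_equiv τ fun i => ?_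
  rw [mem_filter_univ, mem_filter_univ, Perm.mul_apply, hτ]

theorem sum_transitionCount_right [Fintype A] (φ : V → A) (σ : Perm V) (a : A) :
    ∑ b, transitionCount φ σ a b = #{i | φ i = a} := by
  simp only [transitionCount, ← filter_filter]
  exact (card_eq_sum_card_fiberwise fun _ _ => mem_coe.2 (mem_univ _)).symm

theorem exists_perm_le_transitionCount [Fintype A] {φ : V → A} {F : A → A → ℕ}
    (hrow : ∀ a, ∑ b, F a b ≤ #{i | φ i = a}) (hcol : ∀ b, ∑ a, F a b ≤ #{i | φ i = b}) :
    ∃ σ : Perm V, ∀ a b, F a b ≤ transitionCount φ σ a b := by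
  have hsource : ∀ a, #{e : Σ p : A × A, Fin (F p.1 p.2) | e.1.1 = a} = ∑ b, F a b := by
    intro a
    rw [card_filter, Fintype.sum_sigma, Fintype.sum_prod_type]
    simp [apply_ite]
  have htarget : ∀ b, #{e : Σ p : A × A, Fin (F p.1 p.2) | e.1.2 = b} = ∑ a, F a b := by
    intro b
    rw [card_filter, Fintype.sum_sigma, Fintype.sum_prod_type]
    simp [apply_ite]
  obtain ⟨f, hφf⟩ := exists_embedding_comp_eq fun a => (hsource a).trans_le (hrow a)
  obtain ⟨g, hφg⟩ := exists_embedding_comp_eq fun b => (htarget b).trans_le (hcol b)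
  obtain ⟨σ, hσ⟩ := Perm.exists_extending_pair f g f.injective g.injective
  refine ⟨σ, fun a b => ?_⟩
  let position : Fin (F a b) ↪ V := (Function.Embedding.sigmaMk (a, b)).trans f
  calc F a b = #(univ.map position) := by rw [card_map, card_univ, Fintype.card_fin]
    _ ≤ transitionCount φ σ a b := by
        refine card_le_card fun i hi => ?_
        obtain ⟨k, -, rfl⟩ := mem_map.1 hi
        exact mem_filter_univ _ |>.2 ⟨hφf ⟨(a, b), k⟩, (congrArg φ (hσ _)).trans (hφg _)⟩

theorem exists_transitionCount_eq_forall_sameCycle (φ : V → A) (σ : Perm V) :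
    ∃ τ : Perm V, transitionCount φ τ = transitionCount φ σ ∧
      ∀ i j, φ i = φ j → τ.SameCycle i j := by
  classical
  obtain ⟨τ, hτ, hmax⟩ := Set.Finite.exists_maximalFor SameCycle.setoid
    {τ : Perm V | transitionCount φ τ = transitionCount φ σ} (Set.toFinite _) ⟨σ, rfl⟩
  refine ⟨τ, hτ, fun i j hij => ?_⟩
  by_contra hcycle
  have hcount : transitionCount φ (τ * swap i j) = transitionCount φ σ :=
    (transitionCount_mul_right φ τ (apply_swap_of_apply_eq hij)).trans hτ
  have hlt := sameCycle_setoid_lt_mul_swap hcycle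
  exact hlt.not_ge (hmax hcount hlt.le)

theorem exists_of_transitionCount_pos {φ : V → A} {σ : Perm V} {a b : A}
    (h : 0 < transitionCount φ σ a b) : ∃ k, φ k = a ∧ φ (σ k) = b := by
  obtain ⟨k, hk⟩ := card_pos.1 h
  exact ⟨k, mem_filter_univ k |>.1 hk⟩

theorem exists_isCycleOn_univ_transitionCount_eq {φ : V → A} {σ : Perm V}
    (hpos : ∀ a b, 0 < transitionCount φ σ a b) :
    ∃ τ : Perm V, τ.IsCycleOn Set.univ ∧ transitionCount φ τ = transitionCount φ σ := by
  obtain ⟨τ, hcount, hcycle⟩ := exists_transitionCount_eq_forall_sameCycle φ σ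
  refine ⟨τ, ⟨Set.bijOn_univ.2 τ.bijective, fun x _ y _ => ?_⟩, hcount⟩
  obtain ⟨k, hkx, hky⟩ := exists_of_transitionCount_pos (hcount ▸ hpos (φ x) (φ y))
  have hstep : τ.SameCycle k (τ k) := sameCycle_apply_right.2 .rfl
  exact (hcycle _ _ hkx.symm).trans (hstep.trans (hcycle _ _ hky))

theorem exists_isCycleOn_univ_apply_eq_transitionCount_eq {φ : V → A} {σ : Perm V}
    (hpos : ∀ a b, 0 < transitionCount φ σ a b) {s t : V} (hst : s ≠ t) :
    ∃ τ : Perm V, τ.IsCycleOn Set.univ ∧ τ s = t ∧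
      transitionCount φ τ = transitionCount φ σ := by
  obtain ⟨ρ, hρ, hcount⟩ := exists_isCycleOn_univ_transitionCount_eq hpos
  obtain ⟨x, hxs, hxt⟩ := exists_of_transitionCount_pos (hcount ▸ hpos (φ s) (φ t))
  have hx : x ≠ ρ x := (hρ.apply_ne ⟨s, trivial, t, trivial, hst⟩ trivial).symm
  obtain ⟨g, hφg, hgx, hgρx⟩ := exists_perm_apply_eq_apply_eq hx hst hxs hxt
  have hφg' : ∀ k, φ (g⁻¹ k) = φ k := fun k =>
    (hφg (g⁻¹ k)).symm.trans (congrArg φ (g.apply_symm_apply k))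
  refine ⟨g * ρ * g⁻¹, ?_, ?_, ?_⟩
  · simpa only [Set.image_univ, g.surjective.range_eq] using hρ.conj (g := g)
  · have hgs : g⁻¹ s = x := g.symm_apply_eq.2 hgx.symm
    rw [Perm.mul_apply, Perm.mul_apply, hgs, hgρx]
  · rw [transitionCount_mul_right φ _ hφg', transitionCount_mul_left φ _ hφg, hcount]

end TransitionCount

section Rounding

open Equiv Finset

theorem abs_sub_lt_card_of_sum_eq {ι R : Type*} [Fintype ι] [CommRing R] [LinearOrder R]
    [IsStrictOrderedRing R] {x y : ι → R} (hsum : ∑ i, x i = ∑ i, y i)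
    (hxy : ∀ i, x i - 1 < y i) (i : ι) : |y i - x i| < Fintype.card ι := by
  have hsurplus : ∑ j, (y j - x j + 1) = Fintype.card ι := by
    simp [sum_add_distrib, hsum]
  have hupper : y i - x i + 1 ≤ Fintype.card ι := by
    rw [← hsurplus]
    exact single_le_sum (f := fun j => y j - x j + 1) (fun j _ => by linarith [hxy j])
      (mem_univ i)
  have hcard : (1 : R) ≤ Fintype.card ι := by
    exact_mod_cast Fintype.card_pos_iff.2 ⟨i⟩
  exact abs_lt.2 ⟨by linarith [hxy i], by linarith⟩

theorem exists_coupling_abs_sub_lt {A R : Type*} [Fintype A] [AddCommGroup R]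
    [LinearOrder R] [IsOrderedAddMonoid R] {J : A → A → R} {π ρ : A → R} {ε : R}
    (hrow : ∀ a, ∑ b, J a b = π a) (hcol : ∀ b, ∑ a, J a b = π b) (hρ : ∀ a, |ρ a - π a| < ε) :
    ∃ J' : A → A → R, (∀ a, ∑ b, J' a b = ρ a) ∧ (∀ b, ∑ a, J' a b = ρ b) ∧
      ∀ a b, |J' a b - J a b| < ε := by
  classical
  refine ⟨fun a b => J a b + if a = b then ρ a - π a else 0, fun a => ?_, fun b => ?_,
    fun a b => ?_⟩
  · simp [sum_add_distrib, hrow]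
  · simp [sum_add_distrib, hcol]
  · rw [add_sub_cancel_left]
    split_ifs
    · exact hρ a
    · rw [abs_zero]
      exact (abs_nonneg _).trans_lt (hρ a)

variable {V A : Type*} [Fintype V] [Fintype A] [DecidableEq A] {φ : V → A} {x : A → A → ℝ}

theorem exists_perm_abs_transitionCount_sub_lt (hx : ∀ a b, 1 ≤ x a b)
    (hrow : ∀ a, ∑ b, x a b = #{i | φ i = a}) (hcol : ∀ b, ∑ a, x a b = #{i | φ i = b}) :
    ∃ σ : Perm V, ∀ a b, 0 < transitionCount φ σ a b ∧
      |(transitionCount φ σ a b : ℝ) - x a b| < Fintype.card A := by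
  have hfloor : ∀ a b, (⌊x a b⌋₊ : ℝ) ≤ x a b := fun a b =>
    Nat.floor_le (zero_le_one.trans (hx a b))
  obtain ⟨σ, hσ⟩ := exists_perm_le_transitionCount (φ := φ) (F := fun a b => ⌊x a b⌋₊)
    (fun a => by exact_mod_cast (sum_le_sum fun b _ => hfloor a b).trans_eq (hrow a))
    (fun b => by exact_mod_cast (sum_le_sum fun a _ => hfloor a b).trans_eq (hcol b))
  have hlower : ∀ a b, x a b - 1 < transitionCount φ σ a b := fun a b =>
    (Nat.sub_one_lt_floor _).trans_le (by exact_mod_cast hσ a b)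
  refine ⟨σ, fun a b => ⟨(Nat.floor_pos.2 (hx a b)).trans_le (hσ a b), ?_⟩⟩
  refine abs_sub_lt_card_of_sum_eq ?_ (hlower a) b
  rw [hrow a, ← sum_transitionCount_right φ σ a, Nat.cast_sum]

variable {π : A → ℝ} {J : A → A → ℝ} {ε : ℝ}

theorem nontrivial_of_add_inv_card_le [Nonempty V] (hrow : ∀ a, ∑ b, J a b = π a)
    (hφ : ∀ a, |(#{i | φ i = a} : ℝ) / Fintype.card V - π a| < ε)
    (hJ : ∀ a b, ε + 1 / Fintype.card V ≤ J a b) : Nontrivial V := by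
  obtain ⟨a⟩ : Nonempty A := ‹Nonempty V›.map φ
  have hε : 0 < ε := (abs_nonneg _).trans_lt (hφ a)
  have hcard : (0 : ℝ) < Fintype.card V := Nat.cast_pos.2 Fintype.card_pos
  have hJπ : J a a ≤ π a := hrow a ▸
    single_le_sum (fun b _ => le_trans (by positivity) (hJ a b)) (mem_univ a)
  have hfreq : 1 / Fintype.card V < (#{i | φ i = a} : ℝ) / Fintype.card V := by
    linarith [hJ a a, (abs_lt.1 (hφ a)).1]
  have hfiber : 1 < #{i | φ i = a} := by
    exact_mod_cast (div_lt_div_iff_of_pos_right hcard).1 hfreq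
  exact Fintype.one_lt_card_iff_nontrivial.1 (hfiber.trans_le (card_le_univ _))

theorem exists_perm_abs_transitionCount_div_card_sub_lt [Nonempty V]
    (hrow : ∀ a, ∑ b, J a b = π a) (hcol : ∀ b, ∑ a, J a b = π b)
    (hφ : ∀ a, |(#{i | φ i = a} : ℝ) / Fintype.card V - π a| < ε)
    (hJ : ∀ a b, ε + 1 / Fintype.card V ≤ J a b) :
    ∃ σ : Perm V, ∀ a b, 0 < transitionCount φ σ a b ∧
      |(transitionCount φ σ a b : ℝ) / Fintype.card V - J a b|
        < ε + Fintype.card A / Fintype.card V := by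
  set M : ℝ := (Fintype.card V : ℝ)
  have hM : 0 < M := Nat.cast_pos.2 Fintype.card_pos
  obtain ⟨J', hrow', hcol', hJ'⟩ := exists_coupling_abs_sub_lt hrow hcol hφ
  have hlower : ∀ a b, 1 ≤ M * J' a b := fun a b => (div_le_iff₀' hM).1 <| by
    linarith [hJ a b, (abs_lt.1 (hJ' a b)).1]
  obtain ⟨σ, hσ⟩ := exists_perm_abs_transitionCount_sub_lt (φ := φ) hlower
    (fun a => by rw [← mul_sum, hrow', mul_div_cancel₀ _ hM.ne'])
    (fun b => by rw [← mul_sum, hcol', mul_div_cancel₀ _ hM.ne'])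
  refine ⟨σ, fun a b => ⟨(hσ a b).1, ?_⟩⟩
  have hround : |(transitionCount φ σ a b : ℝ) / M - J' a b| < Fintype.card A / M := by
    have hscale : (transitionCount φ σ a b : ℝ) / M - J' a b =
        (transitionCount φ σ a b - M * J' a b) / M := by field_simp
    rw [hscale, abs_div, abs_of_pos hM]
    gcongr
    exact (hσ a b).2
  linarith [abs_sub_le ((transitionCount φ σ a b : ℝ) / M) (J' a b) (J a b), hJ' a b]

end Rounding

section Line

open Finset

variable {N : ℕ}

theorem lineGraph_connected {σ : Equiv.Perm (Fin N)} (hσ : σ.IsCycleOn Set.univ) {t : Fin N}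
    (ht : t.val = N - 1) : (lineGraph σ).Connected := by
  have hstep : ∀ w, w ≠ t → (lineGraph σ).Reachable w (σ w) := by
    intro w hwt
    by_cases hw : w = σ w
    · rw [← hw]
    have hlt : w.val < N - 1 := by
      have := Fin.val_ne_of_ne hwt
      omega
    exact SimpleGraph.Adj.reachable ((SimpleGraph.fromRel_adj ..).2 ⟨hw, .inl ⟨hlt, rfl⟩⟩)
  refine SimpleGraph.connected_iff_exists_forall_reachable _ |>.2 ⟨t, fun z => ?_⟩
  exact rel_of_sameCycle (SimpleGraph.reachable_is_equivalence _) (fun w _ => hstep w)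
    (hσ.2 trivial trivial)

theorem abs_div_sub_one_sub_div_le {n m M : ℝ} (hM : 1 < M) (hn : 0 ≤ n) (hnM : n ≤ M - 1)
    (hnm : n ≤ m) (hmn : m ≤ n + 1) : |n / (M - 1) - m / M| ≤ 1 / M := by
  have hM' : 0 < M - 1 := sub_pos.2 hM
  have hM0 : 0 < M := zero_lt_one.trans hM
  have hsplit : n / (M - 1) - m / M = (n / (M - 1) - (m - n)) / M := by
    field_simp
    ring
  have hfreq_nonneg : 0 ≤ n / (M - 1) := div_nonneg hn hM'.le
  have hfreq_le : n / (M - 1) ≤ 1 := (div_le_one hM').2 hnM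
  rw [hsplit, abs_div, abs_of_pos hM0]
  gcongr
  exact abs_le.2 ⟨by linarith, by linarith⟩

theorem abs_line_frequency_sub_transitionCount_div_le {A : Type*} [DecidableEq A] (hN : 1 < N)
    (φ : Fin N → A) (σ : Equiv.Perm (Fin N)) (a b : A) :
    |(#{k : Fin N | k.val < N - 1 ∧ φ k = a ∧ φ (σ k) = b} : ℝ) / ((N : ℝ) - 1)
      - transitionCount φ σ a b / N| ≤ 1 / N := by
  obtain ⟨t, ht⟩ : ∃ t : Fin N, t.val = N - 1 := ⟨⟨N - 1, by omega⟩, rfl⟩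
  have hlast : ∀ k : Fin N, k.val < N - 1 ↔ k ≠ t := by
    intro k
    rw [ne_eq, Fin.ext_iff, ht]
    lia
  have herase : ({k : Fin N | k.val < N - 1 ∧ φ k = a ∧ φ (σ k) = b} : Finset (Fin N)) =
      erase {k | φ k = a ∧ φ (σ k) = b} t := by
    ext k
    simp only [mem_filter_univ, mem_erase, hlast]
  have hcard : #(erase univ t) = N - 1 := by
    rw [card_erase_of_mem (mem_univ t), card_univ, Fintype.card_fin]
  have hle : #(erase {k | φ k = a ∧ φ (σ k) = b} t) + 1 ≤ N := by
    have := card_le_card (erase_subset_erase t (subset_univ {k | φ k = a ∧ φ (σ k) = b}))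
    omega
  have hpred : transitionCount φ σ a b ≤ #(erase {k | φ k = a ∧ φ (σ k) = b} t) + 1 :=
    Nat.sub_le_iff_le_add.1 pred_card_le_card_erase
  rw [herase]
  refine abs_div_sub_one_sub_div_le (by exact_mod_cast hN) (Nat.cast_nonneg _)
    (le_sub_iff_add_le.2 (by exact_mod_cast hle)) ?_ (by exact_mod_cast hpred)
  exact_mod_cast card_erase_le

end Line

section Constants

variable {K N ε : ℝ}

theorem add_one_div_le_two_mul_mul_add_sq_div (hK : 1 ≤ K) (hε : 0 ≤ ε) (hN : 0 ≤ N) :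
    ε + 1 / N ≤ 2 * K * ε + K ^ 2 / N := by
  have hεK : ε ≤ 2 * K * ε := le_mul_of_one_le_left hε (by linarith)
  gcongr
  exact one_le_pow₀ hK

theorem add_add_one_div_le_two_mul_mul_add_sq_div (hK : 1 ≤ K) (hε : 0 ≤ ε) (hN : 0 ≤ N) :
    ε + (K + 1) / N ≤ 2 * K * ε + 3 * K ^ 2 / N := by
  have hεK : ε ≤ 2 * K * ε := le_mul_of_one_le_left hε (by linarith)
  have hKsq : K ≤ K ^ 2 := le_self_pow₀ hK two_ne_zero
  gcongr
  linarith

end Constants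

theorem stmt4_general {A : Type*} [Fintype A] [DecidableEq A]
    (N : ℕ) (hN : 0 < N) (π : A → ℝ) (J : A → A → ℝ) (ε : ℝ)
    (hJ1 : ∀ a, ∑ b, J a b = π a) (hJ2 : ∀ b, ∑ a, J a b = π b)
    (φ : Fin N → A)
    (hemp : ∀ a, |((Finset.univ.filter (fun i => φ i = a)).card : ℝ) / N - π a| < ε)
    (hJmin : ∀ a b, ε + 1 / N ≤ J a b) :
    ∃ σ : Equiv.Perm (Fin N),
      (∀ i, (σ i).val = 0 ↔ i.val = N - 1) ∧
      (lineGraph σ).Connected ∧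
      ∀ a b,
        |((Finset.univ.filter
            (fun k : Fin N => k.val < N - 1 ∧ φ k = a ∧ φ (σ k) = b)).card : ℝ) / ((N : ℝ) - 1)
          - J a b|
        < ε + ((Fintype.card A : ℝ) + 1) / N := by
  have : Nonempty (Fin N) := ⟨⟨0, hN⟩⟩
  have hcard : (N : ℝ) = Fintype.card (Fin N) := by rw [Fintype.card_fin]
  rw [hcard] at hemp hJmin
  have hN1 : 1 < N := Fin.nontrivial_iff_two_le.1 (nontrivial_of_add_inv_card_le hJ1 hemp hJmin)
  obtain ⟨ρ, hρ⟩ := exists_perm_abs_transitionCount_div_card_sub_lt hJ1 hJ2 hemp hJmin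
  let first : Fin N := ⟨0, hN⟩
  let last : Fin N := ⟨N - 1, Nat.sub_one_lt hN.ne'⟩
  have hne : last ≠ first := Fin.ne_of_val_ne (Nat.sub_ne_zero_of_lt hN1)
  obtain ⟨σ, hcycle, hlast, hcount⟩ :=
    exists_isCycleOn_univ_apply_eq_transitionCount_eq (fun a b => (hρ a b).1) hne
  refine ⟨σ, fun i => ?_, lineGraph_connected hcycle (t := last) rfl, fun a b => ?_⟩
  · calc (σ i).val = 0 ↔ σ i = σ last := by rw [hlast, Fin.ext_iff]
      _ ↔ i.val = N - 1 := by rw [σ.apply_eq_iff_eq, Fin.ext_iff]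
  · have hround := (hρ a b).2
    rw [← hcount, ← hcard] at hround
    have hcut := abs_line_frequency_sub_transitionCount_div_le hN1 φ σ a b
    refine (abs_sub_le _ (transitionCount φ σ a b / N : ℝ) _).trans_lt ?_
    rw [add_div]
    linarith

theorem stmt4 {A : Type*} [Fintype A] [DecidableEq A]
    (N : ℕ) (hN : 0 < N)
    (π : A → ℝ) (J : A → A → ℝ) (ε : ℝ) (hε : 0 < ε) (hε1 : ε < 1)
    (hπ0 : ∀ a, 0 ≤ π a) (hπ1 : ∑ a, π a = 1)
    (hJ0 : ∀ a b, 0 ≤ J a b)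
    (hJ1 : ∀ a, ∑ b, J a b = π a) (hJ2 : ∀ b, ∑ a, J a b = π b)
    (φ : Fin N → A)
    (hemp : ∀ a, |((Finset.univ.filter (fun i => φ i = a)).card : ℝ) / N - π a| < ε)
    (hJmin : ∀ a b, 2 * (Fintype.card A : ℝ) * ε + (Fintype.card A : ℝ) ^ 2 / N < J a b) :
    ∃ σ : Equiv.Perm (Fin N),
      (∀ i, (σ i).val = 0 ↔ i.val = N - 1) ∧
      (lineGraph σ).Connected ∧
      ∀ a b,
        |((Finset.univ.filter
            (fun k : Fin N => k.val < N - 1 ∧ φ k = a ∧ φ (σ k) = b)).card : ℝ) / ((N : ℝ) - 1)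
          - J a b|
        < 2 * (Fintype.card A : ℝ) * ε + 3 * (Fintype.card A : ℝ) ^ 2 / N := by
  have hK : (1 : ℝ) ≤ Fintype.card A := Nat.one_le_cast.2 (Fintype.card_pos_iff.2 ⟨φ ⟨0, hN⟩⟩)
  obtain ⟨σ, hends, hconn, hσ⟩ := stmt4_general N hN π J ε hJ1 hJ2 φ hemp fun a b =>
    (add_one_div_le_two_mul_mul_add_sq_div hK hε.le N.cast_nonneg).trans (hJmin a b).le
  exact ⟨σ, hends, hconn, fun a b => (hσ a b).trans_le
    (add_add_one_div_le_two_mul_mul_add_sq_div hK hε.le N.cast_nonneg)⟩
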